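/- arXiv:1703.10434 — 2 statements merged into one kernel-verified Lean document; each statement's English description precedes it below -/
import Mathlib

section
/- Strong Wigner–Araki–Yanase theorem: Let U be a unitary on ℂ^{d_S}⊗ℂ^{d_A}, ϕ ∈ ℂ^{d_A} a unit vector, F an effect on ℂ^{d_A} (pointer effect), and let E be the effect on ℂ^{d_S} determined by the probability reproducibility condition ⟨φ, E φ⟩ = ⟨U(φ ⊗ ϕ), (1 ⊗ F) U(φ ⊗ ϕ)⟩ for all φ ∈ ℂ^{d_S}. If V is a unitary on ℂ^{d_S} such that U·(V ⊗ 1) = (V ⊗ 1)·U, then V E V* = E. In particular, if the conservation law [U, exp(itL_S) ⊗ 1] = 0 holds for all t ∈ ℝ for a Hermitian L_S, then every effect measurable by such a scheme is invariant: exp(itL_S) E exp(−itL_S) = E for all t. -/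
open Matrix
open scoped Kronecker ComplexOrder

noncomputable section

/-- The tensor product of vectors: `(φ ⊗ ϕ)(i,j) = φ i · ϕ j`. -/
def vtens {dS dA : ℕ} (φ : Fin dS → ℂ) (ϕ : Fin dA → ℂ) : Fin dS × Fin dA → ℂ :=
  fun p => φ p.1 * ϕ p.2

/-- Matrix exponential, `exp M = ∑ₖ Mᵏ/k!`. -/
def mexp {d : ℕ} (M : Matrix (Fin d) (Fin d) ℂ) : Matrix (Fin d) (Fin d) ℂ :=
  ∑' k : ℕ, ((k.factorial : ℂ))⁻¹ • M ^ k

/-!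
Passing from `φ` to `V φ` changes the final state `U (φ ⊗ ϕ)` into `(V ⊗ 1) U (φ ⊗ ϕ)`, because
`V ⊗ 1` commutes with the coupling. The pointer observable `1 ⊗ F` commutes with the unitary `V ⊗ 1`
as well, so its expectation value is the same in both final states. Hence `E` has the same
expectation value in `φ` and `V φ` for every `φ`, and over `ℂ` a matrix is determined by its
quadratic form.
-/

section QuadraticForm

variable {n k : Type*} [Fintype n] [Fintype k]

theorem star_mulVec_dotProduct_mulVec_mulVec {R : Type*} [Semiring R] [StarRing R]
    (A : Matrix k k R) (W : Matrix k n R) (x : n → R) :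
    star (W *ᵥ x) ⬝ᵥ A *ᵥ (W *ᵥ x) = star x ⬝ᵥ (Wᴴ * A * W) *ᵥ x := by
  rw [star_mulVec, ← dotProduct_mulVec, mulVec_mulVec, mulVec_mulVec, Matrix.mul_assoc]

theorem star_mulVec_dotProduct_mulVec_of_commute [DecidableEq n] {R : Type*}
    [CommRing R] [StarRing R] {V A : Matrix n n R} (hV : V ∈ unitaryGroup n R)
    (hVA : Commute V A) (x : n → R) :
    star (V *ᵥ x) ⬝ᵥ A *ᵥ (V *ᵥ x) = star x ⬝ᵥ A *ᵥ x := by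
  rw [star_mulVec_dotProduct_mulVec_mulVec, ← star_eq_conjTranspose,
    (commute_unitary_iff_star_left_conjugate hV).mp hVA]

theorem eq_of_star_dotProduct_mulVec_eq {A B : Matrix n n ℂ}
    (h : ∀ x : n → ℂ, star x ⬝ᵥ A *ᵥ x = star x ⬝ᵥ B *ᵥ x) : A = B := by
  classical
  rw [← (toEuclideanLin (𝕜 := ℂ)).injective.eq_iff, ← ext_inner_map]
  intro x
  rw [← inner_conj_symm, ← inner_conj_symm (toEuclideanLin B x)]
  simp only [EuclideanSpace.inner_eq_star_dotProduct, ofLp_toLpLin, toLin'_apply,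
    dotProduct_comm _ (star x.ofLp), h]

theorem commute_of_star_mulVec_dotProduct_mulVec_eq [DecidableEq n]
    {V A : Matrix n n ℂ} (hV : V ∈ unitaryGroup n ℂ)
    (h : ∀ x : n → ℂ, star (V *ᵥ x) ⬝ᵥ A *ᵥ (V *ᵥ x) = star x ⬝ᵥ A *ᵥ x) : Commute V A := by
  rw [commute_unitary_iff_star_left_conjugate hV]
  refine eq_of_star_dotProduct_mulVec_eq fun x => ?_
  rw [star_eq_conjTranspose, ← star_mulVec_dotProduct_mulVec_mulVec, h]

end QuadraticForm

section Kronecker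

variable {R l m n p : Type*} [CommSemiring R]

/-- The tensor product of two vectors as a vector indexed by the product type; `vtens` is the case
of complex vectors indexed by `Fin`. -/
def vecKronecker (x : m → R) (y : n → R) : m × n → R :=
  fun i => x i.1 * y i.2

theorem kronecker_mulVec_vecKronecker [Fintype m] [Fintype n] (A : Matrix l m R)
    (B : Matrix p n R) (x : m → R) (y : n → R) :
    (A ⊗ₖ B) *ᵥ vecKronecker x y = vecKronecker (A *ᵥ x) (B *ᵥ y) := by
  ext ⟨i, j⟩
  simp only [mulVec, dotProduct, vecKronecker, kronecker_apply, Fintype.sum_prod_type,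
    Fintype.sum_mul_sum, mul_mul_mul_comm]

theorem commute_kronecker_one_one_kronecker [Fintype m] [Fintype n] [DecidableEq m]
    [DecidableEq n] (A : Matrix m m R) (B : Matrix n n R) :
    Commute (A ⊗ₖ (1 : Matrix n n R)) ((1 : Matrix m m R) ⊗ₖ B) := by
  rw [commute_iff_eq, ← mul_kronecker_mul, ← mul_kronecker_mul]
  simp only [Matrix.mul_one, Matrix.one_mul]

end Kronecker

theorem exp_I_mul_ofReal_smul_mem_unitaryGroup {n : Type*} [Fintype n] [DecidableEq n]
    {L : Matrix n n ℂ} (hL : L.IsHermitian) (t : ℝ) :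
    NormedSpace.exp ((Complex.I * (t : ℂ)) • L) ∈ unitaryGroup n ℂ := by
  have it_skew : Complex.I * (t : ℂ) ∈ skewAdjoint ℂ := by simp [skewAdjoint.mem_iff]
  exact open scoped Matrix.Norms.L2Operator in
    let +nondep : NormedAlgebra ℚ (Matrix n n ℂ) := .restrictScalars ℚ ℂ (Matrix n n ℂ)
    NormedSpace.exp_mem_unitary_of_mem_skewAdjoint
      (hL.isSelfAdjoint.smul_mem_skewAdjoint it_skew)

theorem mexp_eq_exp {d : ℕ} (M : Matrix (Fin d) (Fin d) ℂ) : mexp M = NormedSpace.exp M := by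
  rw [NormedSpace.exp_eq_tsum ℂ, mexp]

theorem mexp_I_mul_ofReal_smul_mem_unitaryGroup {d : ℕ} {L : Matrix (Fin d) (Fin d) ℂ}
    (hL : L.IsHermitian) (t : ℝ) :
    mexp ((Complex.I * (t : ℂ)) • L) ∈ unitaryGroup (Fin d) ℂ :=
  mexp_eq_exp ((Complex.I * (t : ℂ)) • L) ▸ exp_I_mul_ofReal_smul_mem_unitaryGroup hL t

theorem strong_WAY_general {m n p : Type*} [Fintype m] [Fintype n] [Fintype p]
    [DecidableEq m] [DecidableEq n] [DecidableEq p]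
    (U : Matrix (m × p) (m × n) ℂ) (ϕ : n → ℂ) (F : Matrix p p ℂ) (E : Matrix m m ℂ)
    (hE : ∀ φ : m → ℂ,
      star φ ⬝ᵥ E *ᵥ φ
        = star (U *ᵥ vecKronecker φ ϕ) ⬝ᵥ
            ((1 : Matrix m m ℂ) ⊗ₖ F) *ᵥ (U *ᵥ vecKronecker φ ϕ))
    {V : Matrix m m ℂ} (hV : V ∈ unitaryGroup m ℂ)
    (hUV : U * (V ⊗ₖ (1 : Matrix n n ℂ)) = (V ⊗ₖ (1 : Matrix p p ℂ)) * U) :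
    V * E * Vᴴ = E := by
  have final_state (φ : m → ℂ) : U *ᵥ vecKronecker (V *ᵥ φ) ϕ
      = (V ⊗ₖ (1 : Matrix p p ℂ)) *ᵥ (U *ᵥ vecKronecker φ ϕ) := by
    rw [mulVec_mulVec, ← hUV, ← mulVec_mulVec, kronecker_mulVec_vecKronecker, one_mulVec]
  have V_one_unitary : V ⊗ₖ (1 : Matrix p p ℂ) ∈ unitaryGroup (m × p) ℂ :=
    kronecker_mem_unitary hV (one_mem _)
  refine (commute_unitary_iff_star_right_conjugate hV).mp
    (commute_of_star_mulVec_dotProduct_mulVec_eq hV fun φ => ?_)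
  rw [hE, hE, final_state, star_mulVec_dotProduct_mulVec_of_commute V_one_unitary
    (commute_kronecker_one_one_kronecker V F)]

/-- **Strong Wigner–Araki–Yanase theorem**: if every measurement coupling commutes with
`V ⊗ 1`, the measured effect `E` is `V`-invariant; in particular, conservation of a Hermitian
`L_S` on the system alone forces `exp(itL_S) E exp(−itL_S) = E` for all `t`. -/
theorem strong_WAY {dS dA : ℕ}
    (U : Matrix (Fin dS × Fin dA) (Fin dS × Fin dA) ℂ)
    (hU : U ∈ Matrix.unitaryGroup (Fin dS × Fin dA) ℂ)
    (ϕ : Fin dA → ℂ) (hϕ : star ϕ ⬝ᵥ ϕ = 1)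
    (F : Matrix (Fin dA) (Fin dA) ℂ) (hF : F.PosSemidef ∧ (1 - F).PosSemidef)
    (E : Matrix (Fin dS) (Fin dS) ℂ) (hEeff : E.PosSemidef ∧ (1 - E).PosSemidef)
    (hE : ∀ φ : Fin dS → ℂ,
      star φ ⬝ᵥ E.mulVec φ
        = star (U.mulVec (vtens φ ϕ)) ⬝ᵥ
            (((1 : Matrix (Fin dS) (Fin dS) ℂ) ⊗ₖ F).mulVec (U.mulVec (vtens φ ϕ)))) :
    (∀ V : Matrix (Fin dS) (Fin dS) ℂ, V ∈ Matrix.unitaryGroup (Fin dS) ℂ →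
      U * (V ⊗ₖ (1 : Matrix (Fin dA) (Fin dA) ℂ))
        = (V ⊗ₖ (1 : Matrix (Fin dA) (Fin dA) ℂ)) * U →
      V * E * Vᴴ = E) ∧
    (∀ LS : Matrix (Fin dS) (Fin dS) ℂ, LS.IsHermitian →
      (∀ t : ℝ, U * (mexp ((Complex.I * (t : ℂ)) • LS) ⊗ₖ (1 : Matrix (Fin dA) (Fin dA) ℂ))
        = (mexp ((Complex.I * (t : ℂ)) • LS) ⊗ₖ (1 : Matrix (Fin dA) (Fin dA) ℂ)) * U) →
      ∀ t : ℝ, mexp ((Complex.I * (t : ℂ)) • LS) * E * (mexp ((Complex.I * (t : ℂ)) • LS))ᴴ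
        = E) := by
  exact ⟨fun _ hV hUV => strong_WAY_general U ϕ F E hE hV hUV, fun _ hLS hULS t =>
    strong_WAY_general U ϕ F E hE (mexp_I_mul_ofReal_smul_mem_unitaryGroup hLS t) (hULS t)⟩

end
end

section
/- Wigner–Araki–Yanase theorem: Let A be a Hermitian matrix on ℂ^{d_S} with spectral decomposition A = Σ_λ λ·P_λ, and let ⟨ℂ^{d_A}, U, ϕ, Z⟩ be a measurement scheme for A: U is a unitary on ℂ^{d_S}⊗ℂ^{d_A}, ϕ ∈ ℂ^{d_A} a unit vector, and Z a Hermitian pointer with spectral projections (Q_λ) indexed by the eigenvalues λ of A, satisfying probability reproducibility: ‖(1 ⊗ Q_λ) U(φ ⊗ ϕ)‖² = ‖P_λ φ‖² for all φ ∈ ℂ^{d_S} and all eigenvalues λ. Let L_S on ℂ^{d_S} and L_A on ℂ^{d_A} be Hermitian with the conservation law [U, L_S ⊗ 1 + 1 ⊗ L_A] = 0. If either the measurement is repeatable (⟨U(φ ⊗ ϕ), (P_λ ⊗ Q_λ) U(φ ⊗ ϕ)⟩ = ‖P_λ φ‖² for all φ and λ) or the Yanase condition [Q_λ, L_A] = 0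 holds for all λ, then [A, L_S] = 0. -/
open Matrix
open scoped Kronecker ComplexOrder

noncomputable section

/-!
Put `V φ = U (φ ⊗ ϕ)`. Probability reproducibility forces `(1 ⊗ Q i) V = V (P i)`: the vector
`(1 ⊗ Q i) V (P j) φ` has norm zero for `i ≠ j`, and both families resolve the identity.
Repeatability upgrades this to `(P i ⊗ Q i) V = V (P i)`, since `P i ⊗ Q i ≤ 1 ⊗ Q i` are
projections with equal expectations in the range of `V`. With `E i = 1 ⊗ Q i` under the Yanase
condition and `E i = P i ⊗ Q i` under repeatability, the conserved quantity `L = L_S ⊗ 1 + 1 ⊗ L_A`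
satisfies `E i * L * E j = 0` for `i ≠ j`, so `Vᴴ L V` commutes with every `P i`. By the
conservation law `Vᴴ L V` is `L_S` up to a scalar.
-/

section Intertwining

variable {R k m ι : Type*} [Fintype k] [Fintype m] [DecidableEq m] [Fintype ι]

theorem mul_eq_mul_of_offDiagonal_eq_zero [Semiring R] [DecidableEq k] {E : ι → Matrix k k R}
    {P : ι → Matrix m m R} (hE : ∑ i, E i = 1) (hP : ∑ i, P i = 1) {V : Matrix k m R}
    (hV : Pairwise fun i j => E i * V * P j = 0) (i : ι) : E i * V = V * P i :=
  calc
    E i * V = ∑ j, E i * V * P j := by rw [← Matrix.mul_sum, hP, Matrix.mul_one]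
    _ = E i * V * P i := Fintype.sum_eq_single i fun _ hj => hV hj.symm
    _ = ∑ j, E j * V * P i := (Fintype.sum_eq_single i fun _ hj => hV hj).symm
    _ = V * P i := by rw [← Matrix.sum_mul, ← Matrix.sum_mul, hE, Matrix.one_mul]

theorem commute_conjTranspose_mul_mul_of_intertwining [Semiring R] [StarRing R]
    {E : ι → Matrix k k R} {P : ι → Matrix m m R} (hE : ∀ i, (E i).IsHermitian)
    (hPh : ∀ i, (P i).IsHermitian) (hP : ∑ i, P i = 1) {V : Matrix k m R}
    (hEV : ∀ i, E i * V = V * P i) {L : Matrix k k R} (hL : Pairwise fun i j => E i * L * E j = 0)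
    (i : ι) : Commute (P i) (Vᴴ * L * V) := by
  have hVE (i : ι) : P i * Vᴴ = Vᴴ * E i := by
    simpa only [conjTranspose_mul, (hE i).eq, (hPh i).eq] using
      (congrArg conjTranspose (hEV i)).symm
  refine mul_eq_mul_of_offDiagonal_eq_zero hP hP (fun i j hij => ?_) i
  calc
    P i * (Vᴴ * L * V) * P j = (P i * Vᴴ) * L * (V * P j) := by simp only [Matrix.mul_assoc]
    _ = Vᴴ * (E i * L * E j) * V := by rw [hVE, ← hEV]; simp only [Matrix.mul_assoc]
    _ = 0 := by rw [hL hij, Matrix.mul_zero, Matrix.zero_mul]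

end Intertwining

section Expectation

variable {R k m ι : Type*} [Fintype k] [Fintype m]

theorem star_mulVec_dotProduct_mulVec_of_isStarProjection [Semiring R] [StarRing R]
    {E : Matrix k k R} (hE : IsStarProjection E) (v : k → R) :
    star (E *ᵥ v) ⬝ᵥ (E *ᵥ v) = star v ⬝ᵥ (E *ᵥ v) := by
  have hEE : Eᴴ * E = E := by
    rw [← star_eq_conjTranspose, hE.isSelfAdjoint.star_eq, hE.isIdempotentElem.eq]
  rw [star_mulVec, ← dotProduct_mulVec, mulVec_mulVec, hEE]

variable [Ring R] [PartialOrder R] [StarRing R] [StarOrderedRing R] [NoZeroDivisors R]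

theorem eq_zero_of_forall_star_mulVec_dotProduct_mulVec {W : Matrix k m R}
    (hW : ∀ x, star (W *ᵥ x) ⬝ᵥ (W *ᵥ x) = 0) : W = 0 := by
  classical
  refine ext_of_mulVec_single fun i => ?_
  rw [zero_mulVec, dotProduct_star_self_eq_zero.mp (hW _)]

theorem mul_eq_mul_of_forall_expectation_eq {E F : Matrix k k R} (hE : IsStarProjection E)
    (hF : IsStarProjection F) (hEF : E * F = E) {V : Matrix k m R}
    (hV : ∀ x, star (V *ᵥ x) ⬝ᵥ (E *ᵥ V *ᵥ x) = star (V *ᵥ x) ⬝ᵥ (F *ᵥ V *ᵥ x)) :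
    E * V = F * V := by
  have hFE : IsStarProjection (F - E) := hE.sub_of_mul_eq_left hF hEF
  suffices h : (F - E) * V = 0 by rwa [Matrix.sub_mul, sub_eq_zero, eq_comm] at h
  refine eq_zero_of_forall_star_mulVec_dotProduct_mulVec fun x => ?_
  rw [← mulVec_mulVec, star_mulVec_dotProduct_mulVec_of_isStarProjection hFE, sub_mulVec,
    dotProduct_sub, hV, sub_self]

theorem mul_eq_mul_of_probability_reproducibility [DecidableEq k] [DecidableEq m] [Fintype ι]
    {E : ι → Matrix k k R} {P : ι → Matrix m m R} (hE : ∑ i, E i = 1)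
    (hP : CompleteOrthogonalIdempotents P) {V : Matrix k m R}
    (hprob : ∀ x i, star (E i *ᵥ V *ᵥ x) ⬝ᵥ (E i *ᵥ V *ᵥ x) = star (P i *ᵥ x) ⬝ᵥ (P i *ᵥ x))
    (i : ι) : E i * V = V * P i := by
  refine mul_eq_mul_of_offDiagonal_eq_zero hE hP.complete (fun i j hij => ?_) i
  refine eq_zero_of_forall_star_mulVec_dotProduct_mulVec fun x => ?_
  rw [← mulVec_mulVec, ← mulVec_mulVec, hprob, mulVec_mulVec, hP.ortho hij, zero_mulVec,
    dotProduct_zero]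

end Expectation

section Kronecker

variable {R m n ι : Type*}

theorem isStarProjection_kronecker [CommSemiring R] [StarRing R] [Fintype m] [Fintype n]
    {X : Matrix m m R} {Y : Matrix n n R} (hX : IsStarProjection X) (hY : IsStarProjection Y) :
    IsStarProjection (X ⊗ₖ Y) where
  isIdempotentElem := by
    rw [IsIdempotentElem, ← mul_kronecker_mul, hX.isIdempotentElem.eq, hY.isIdempotentElem.eq]
  isSelfAdjoint := by
    rw [IsSelfAdjoint, star_eq_conjTranspose, conjTranspose_kronecker, ← star_eq_conjTranspose,
      ← star_eq_conjTranspose, hX.isSelfAdjoint.star_eq, hY.isSelfAdjoint.star_eq]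

theorem sum_one_kronecker_eq_one [CommSemiring R] [DecidableEq m] [DecidableEq n] [Fintype ι]
    {Q : ι → Matrix n n R} (hQ : ∑ i, Q i = 1) : ∑ i, (1 : Matrix m m R) ⊗ₖ Q i = 1 := by
  rw [← one_kronecker_one, ← hQ]
  exact (map_sum (kroneckerBilinear (R := R) (1 : Matrix m m R)) Q Finset.univ).symm

theorem kronecker_mul_eq_one_kronecker_mul_of_forall_expectation_eq {k : Type*} [CommRing R]
    [PartialOrder R] [StarRing R] [StarOrderedRing R] [NoZeroDivisors R] [Fintype k] [Fintype m]
    [DecidableEq m] [Fintype n] {P : Matrix m m R} {Q : Matrix n n R} (hP : IsStarProjection P)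
    (hQ : IsStarProjection Q) {V : Matrix (m × n) k R}
    (hV : ∀ x, star (V *ᵥ x) ⬝ᵥ ((P ⊗ₖ Q) *ᵥ V *ᵥ x) =
      star (((1 : Matrix m m R) ⊗ₖ Q) *ᵥ V *ᵥ x) ⬝ᵥ (((1 : Matrix m m R) ⊗ₖ Q) *ᵥ V *ᵥ x)) :
    (P ⊗ₖ Q) * V = ((1 : Matrix m m R) ⊗ₖ Q) * V := by
  have h_one_Q : IsStarProjection ((1 : Matrix m m R) ⊗ₖ Q) :=
    isStarProjection_kronecker (.one _) hQ
  have h_le : (P ⊗ₖ Q) * ((1 : Matrix m m R) ⊗ₖ Q) = P ⊗ₖ Q := by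
    rw [← mul_kronecker_mul, Matrix.mul_one, hQ.isIdempotentElem.eq]
  refine mul_eq_mul_of_forall_expectation_eq (isStarProjection_kronecker hP hQ) h_one_Q h_le
    fun x => ?_
  rw [hV, star_mulVec_dotProduct_mulVec_of_isStarProjection h_one_Q]

/-- The Kronecker sum `X ⊗ 1 + 1 ⊗ Y`: the total of an additive quantity that is `X` on the first
factor and `Y` on the second. -/
def kroneckerSum [Semiring R] [DecidableEq m] [DecidableEq n] (X : Matrix m m R)
    (Y : Matrix n n R) : Matrix (m × n) (m × n) R :=
  X ⊗ₖ 1 + 1 ⊗ₖ Y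

variable {l k p q : Type*} [CommSemiring R] [Fintype m] [DecidableEq m] [Fintype n] [DecidableEq n]

theorem kronecker_mul_kroneckerSum_mul_kronecker (A : Matrix l m R) (X : Matrix m m R)
    (B : Matrix m p R) (C : Matrix k n R) (Y : Matrix n n R) (D : Matrix n q R) :
    (A ⊗ₖ C) * kroneckerSum X Y * (B ⊗ₖ D) =
      (A * X * B) ⊗ₖ (C * D) + (A * B) ⊗ₖ (C * Y * D) := by
  simp only [kroneckerSum, Matrix.mul_add, Matrix.add_mul, ← mul_kronecker_mul, Matrix.mul_one]

theorem kronecker_mul_kroneckerSum_mul_kronecker_eq_zero {A : Matrix l m R} {B : Matrix m p R}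
    {C : Matrix k n R} {D : Matrix n q R} (hAB : A * B = 0) (hCD : C * D = 0) (X : Matrix m m R)
    (Y : Matrix n n R) :
    (A ⊗ₖ C) * kroneckerSum X Y * (B ⊗ₖ D) = 0 := by
  rw [kronecker_mul_kroneckerSum_mul_kronecker, hAB, hCD, kronecker_zero, zero_kronecker, add_zero]

theorem one_kronecker_mul_kroneckerSum_mul_one_kronecker_eq_zero {C Y : Matrix n n R}
    {D : Matrix n q R} (hCD : C * D = 0) (hCY : Commute C Y) (X : Matrix m m R) :
    ((1 : Matrix m m R) ⊗ₖ C) * kroneckerSum X Y * ((1 : Matrix m m R) ⊗ₖ D) = 0 := by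
  rw [kronecker_mul_kroneckerSum_mul_kronecker, hCY.eq, Matrix.mul_assoc Y, hCD, Matrix.mul_zero,
    kronecker_zero, kronecker_zero, add_zero]

end Kronecker

section TensorRight

variable {R m n : Type*} [DecidableEq m]

variable (m) in
/-- The matrix of the map `φ ↦ φ ⊗ ϕ`, which adjoins a second system in the state `ϕ`. -/
def tensorRight [Semiring R] (ϕ : n → R) : Matrix (m × n) m R :=
  of fun p s => (1 : Matrix m m R) p.1 s * ϕ p.2

variable [CommSemiring R] [Fintype m]

theorem tensorRight_mulVec (ϕ : n → R) (φ : m → R) :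
    tensorRight m ϕ *ᵥ φ = fun p => φ p.1 * ϕ p.2 := by
  ext p
  simp [tensorRight, mulVec, dotProduct, one_apply, mul_comm]

variable [Fintype n]

theorem kronecker_mul_tensorRight {l k : Type*} [Fintype l] [DecidableEq l] (X : Matrix l m R)
    (Y : Matrix k n R) (ϕ : n → R) :
    (X ⊗ₖ Y) * tensorRight m ϕ = tensorRight l (Y *ᵥ ϕ) * X := by
  ext p s
  simp [tensorRight, mul_apply, one_apply, mulVec, dotProduct, Fintype.sum_prod_type,
    Finset.mul_sum, mul_comm, mul_left_comm]

variable [StarRing R]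

theorem conjTranspose_tensorRight_mul_tensorRight (χ ϕ : n → R) :
    (tensorRight m χ)ᴴ * tensorRight m ϕ = (star χ ⬝ᵥ ϕ) • (1 : Matrix m m R) := by
  ext s t
  by_cases hst : s = t <;>
    simp [tensorRight, mul_apply, one_apply, dotProduct, Fintype.sum_prod_type, hst, eq_comm]

theorem conjTranspose_tensorRight_mul_kronecker_mul (ϕ : n → R) (X : Matrix m m R)
    (Y : Matrix n n R) :
    (tensorRight m ϕ)ᴴ * (X ⊗ₖ Y) * tensorRight m ϕ = (star ϕ ⬝ᵥ (Y *ᵥ ϕ)) • X := by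
  rw [Matrix.mul_assoc, kronecker_mul_tensorRight, ← Matrix.mul_assoc,
    conjTranspose_tensorRight_mul_tensorRight, Matrix.smul_mul, Matrix.one_mul]

theorem conjTranspose_tensorRight_mul_kroneckerSum_mul [DecidableEq n] {ϕ : n → R}
    (hϕ : star ϕ ⬝ᵥ ϕ = 1) (X : Matrix m m R) (Y : Matrix n n R) :
    (tensorRight m ϕ)ᴴ * kroneckerSum X Y * tensorRight m ϕ =
      X + (star ϕ ⬝ᵥ (Y *ᵥ ϕ)) • (1 : Matrix m m R) := by
  rw [kroneckerSum, Matrix.mul_add, Matrix.add_mul, conjTranspose_tensorRight_mul_kronecker_mul,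
    conjTranspose_tensorRight_mul_kronecker_mul, one_mulVec, hϕ, one_smul]

theorem conjTranspose_mul_kroneckerSum_mul_of_commute [DecidableEq n]
    {U : Matrix (m × n) (m × n) R} (hU : Uᴴ * U = 1) {ϕ : n → R} (hϕ : star ϕ ⬝ᵥ ϕ = 1)
    {X : Matrix m m R} {Y : Matrix n n R} (hcons : Commute U (kroneckerSum X Y)) :
    (U * tensorRight m ϕ)ᴴ * kroneckerSum X Y * (U * tensorRight m ϕ) =
      X + (star ϕ ⬝ᵥ (Y *ᵥ ϕ)) • (1 : Matrix m m R) :=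
  calc
    (U * tensorRight m ϕ)ᴴ * kroneckerSum X Y * (U * tensorRight m ϕ)
      = (tensorRight m ϕ)ᴴ * (Uᴴ * (kroneckerSum X Y * U)) * tensorRight m ϕ := by
        simp only [conjTranspose_mul, Matrix.mul_assoc]
    _ = (tensorRight m ϕ)ᴴ * kroneckerSum X Y * tensorRight m ϕ := by
        rw [← hcons.eq, ← Matrix.mul_assoc Uᴴ, hU, Matrix.one_mul]
    _ = X + (star ϕ ⬝ᵥ (Y *ᵥ ϕ)) • (1 : Matrix m m R) :=
        conjTranspose_tensorRight_mul_kroneckerSum_mul hϕ X Y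

end TensorRight

theorem commute_of_intertwining_kroneckerSum {R m n ι : Type*} [CommRing R] [StarRing R]
    [Fintype m] [DecidableEq m] [Fintype n] [DecidableEq n] [Fintype ι] {P : ι → Matrix m m R}
    (hPh : ∀ i, (P i).IsHermitian) (hP : ∑ i, P i = 1) {U : Matrix (m × n) (m × n) R}
    (hU : Uᴴ * U = 1) {ϕ : n → R} (hϕ : star ϕ ⬝ᵥ ϕ = 1) {X : Matrix m m R} {Y : Matrix n n R}
    (hcons : Commute U (kroneckerSum X Y)) {E : ι → Matrix (m × n) (m × n) R}
    (hE : ∀ i, (E i).IsHermitian)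
    (hEV : ∀ i, E i * (U * tensorRight m ϕ) = U * tensorRight m ϕ * P i)
    (hEL : Pairwise fun i j => E i * kroneckerSum X Y * E j = 0) (i : ι) : Commute (P i) X := by
  have hcomm := commute_conjTranspose_mul_mul_of_intertwining hE hPh hP hEV hEL i
  rw [conjTranspose_mul_kroneckerSum_mul_of_commute hU hϕ hcons] at hcomm
  simpa only [add_sub_cancel_right] using
    hcomm.sub_right ((Commute.one_right (P i)).smul_right (star ϕ ⬝ᵥ (Y *ᵥ ϕ)))

theorem wigner_araki_yanase_general {R m n ι : Type*} [CommRing R] [PartialOrder R] [StarRing R]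
    [StarOrderedRing R] [NoZeroDivisors R] [Fintype m] [DecidableEq m] [Fintype n] [DecidableEq n]
    [Fintype ι] {P : ι → Matrix m m R} (hP : CompleteOrthogonalIdempotents P)
    (hPh : ∀ i, (P i).IsHermitian) {Q : ι → Matrix n n R} (hQ : CompleteOrthogonalIdempotents Q)
    (hQh : ∀ i, (Q i).IsHermitian) {U : Matrix (m × n) (m × n) R}
    (hU : U ∈ unitaryGroup (m × n) R) {ϕ : n → R} (hϕ : star ϕ ⬝ᵥ ϕ = 1)
    (hprob : ∀ (φ : m → R) (i : ι),
      star (((1 : Matrix m m R) ⊗ₖ Q i) *ᵥ U *ᵥ fun p => φ p.1 * ϕ p.2) ⬝ᵥ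
          (((1 : Matrix m m R) ⊗ₖ Q i) *ᵥ U *ᵥ fun p => φ p.1 * ϕ p.2) =
        star (P i *ᵥ φ) ⬝ᵥ (P i *ᵥ φ))
    {LS : Matrix m m R} {LA : Matrix n n R} (hcons : Commute U (kroneckerSum LS LA))
    (hway : (∀ (φ : m → R) (i : ι),
        star (U *ᵥ fun p => φ p.1 * ϕ p.2) ⬝ᵥ ((P i ⊗ₖ Q i) *ᵥ U *ᵥ fun p => φ p.1 * ϕ p.2) =
          star (P i *ᵥ φ) ⬝ᵥ (P i *ᵥ φ)) ∨
      ∀ i, Commute (Q i) LA)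
    (i : ι) : Commute (P i) LS := by
  have hPproj (i : ι) : IsStarProjection (P i) := ⟨hP.idem i, hPh i⟩
  have hQproj (i : ι) : IsStarProjection (Q i) := ⟨hQ.idem i, hQh i⟩
  simp only [← tensorRight_mulVec, mulVec_mulVec _ U] at hprob hway
  have hQV (i : ι) :
      ((1 : Matrix m m R) ⊗ₖ Q i) * (U * tensorRight m ϕ) = U * tensorRight m ϕ * P i :=
    mul_eq_mul_of_probability_reproducibility (E := fun i => 1 ⊗ₖ Q i)
      (sum_one_kronecker_eq_one hQ.complete) hP hprob i
  have hUU := mem_unitaryGroup_iff'.mp hU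
  rcases hway with hrepeatable | hyanase
  · have hPQV (i : ι) : (P i ⊗ₖ Q i) * (U * tensorRight m ϕ) = U * tensorRight m ϕ * P i := by
      rw [kronecker_mul_eq_one_kronecker_mul_of_forall_expectation_eq (hPproj i) (hQproj i)
        fun φ => (hrepeatable φ i).trans (hprob φ i).symm, hQV]
    exact commute_of_intertwining_kroneckerSum hPh hP.complete hUU hϕ hcons
      (fun i => (isStarProjection_kronecker (hPproj i) (hQproj i)).isSelfAdjoint) hPQV
      (fun i j hij => kronecker_mul_kroneckerSum_mul_kronecker_eq_zero (hP.ortho hij)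
        (hQ.ortho hij) LS LA) i
  · exact commute_of_intertwining_kroneckerSum hPh hP.complete hUU hϕ hcons
      (fun i => (isStarProjection_kronecker (.one _) (hQproj i)).isSelfAdjoint) hQV
      (fun i j hij => one_kronecker_mul_kroneckerSum_mul_one_kronecker_eq_zero (hQ.ortho hij)
        (hyanase i) LS) i

/-- **Wigner–Araki–Yanase theorem**: for a measurement scheme of `A = ∑_λ λ P_λ` obeying the
additive conservation law `[U, L_S ⊗ 1 + 1 ⊗ L_A] = 0`, if the measurement is repeatable or
the Yanase condition `[Q_λ, L_A] = 0` holds, then `[A, L_S] = 0`. -/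
theorem wigner_araki_yanase {dS dA : ℕ} {ι : Type*} [Fintype ι] [DecidableEq ι]
    (eval : ι → ℝ) (heval : Function.Injective eval)
    (P : ι → Matrix (Fin dS) (Fin dS) ℂ)
    (hPh : ∀ i, (P i).IsHermitian) (hPi : ∀ i, P i * P i = P i)
    (hPo : ∀ i j, i ≠ j → P i * P j = 0) (hPs : ∑ i, P i = 1)
    (A : Matrix (Fin dS) (Fin dS) ℂ) (hA : A = ∑ i, ((eval i : ℂ)) • P i)
    (Q : ι → Matrix (Fin dA) (Fin dA) ℂ)
    (hQh : ∀ i, (Q i).IsHermitian) (hQi : ∀ i, Q i * Q i = Q i)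
    (hQo : ∀ i j, i ≠ j → Q i * Q j = 0) (hQs : ∑ i, Q i = 1)
    (Z : Matrix (Fin dA) (Fin dA) ℂ) (hZ : Z = ∑ i, ((eval i : ℂ)) • Q i)
    (U : Matrix (Fin dS × Fin dA) (Fin dS × Fin dA) ℂ)
    (hU : U ∈ Matrix.unitaryGroup (Fin dS × Fin dA) ℂ)
    (ϕ : Fin dA → ℂ) (hϕ : star ϕ ⬝ᵥ ϕ = 1)
    (hprob : ∀ (φ : Fin dS → ℂ) (i : ι),
      star (((1 : Matrix (Fin dS) (Fin dS) ℂ) ⊗ₖ Q i).mulVec (U.mulVec (vtens φ ϕ))) ⬝ᵥ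
          (((1 : Matrix (Fin dS) (Fin dS) ℂ) ⊗ₖ Q i).mulVec (U.mulVec (vtens φ ϕ)))
        = star ((P i).mulVec φ) ⬝ᵥ ((P i).mulVec φ))
    (LS : Matrix (Fin dS) (Fin dS) ℂ) (hLS : LS.IsHermitian)
    (LA : Matrix (Fin dA) (Fin dA) ℂ) (hLA : LA.IsHermitian)
    (hcons : U * (LS ⊗ₖ (1 : Matrix (Fin dA) (Fin dA) ℂ)
        + (1 : Matrix (Fin dS) (Fin dS) ℂ) ⊗ₖ LA)
      = (LS ⊗ₖ (1 : Matrix (Fin dA) (Fin dA) ℂ)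
        + (1 : Matrix (Fin dS) (Fin dS) ℂ) ⊗ₖ LA) * U)
    (hway : (∀ (φ : Fin dS → ℂ) (i : ι),
        star (U.mulVec (vtens φ ϕ)) ⬝ᵥ ((P i ⊗ₖ Q i).mulVec (U.mulVec (vtens φ ϕ)))
          = star ((P i).mulVec φ) ⬝ᵥ ((P i).mulVec φ))
      ∨ (∀ i, Q i * LA = LA * Q i)) :
    A * LS = LS * A := by
  rw [hA]
  exact Commute.sum_left _ _ _ fun i _ => (wigner_araki_yanase_general (.mk ⟨hPi, hPo⟩ hPs) hPh
    (.mk ⟨hQi, hQo⟩ hQs) hQh hU hϕ hprob hcons hway i).smul_left _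

end
end
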